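/- Let k ≥ 2 and d₀ ≥ 1. Suppose for all n' ≤ n there exists no quaternary Hermitian LCD [n',k,d'] code with d' ≥ d₀ and Hermitian dual distance ≥ 2. Then there exists no quaternary Hermitian LCD [n,k,d] code with d ≥ d₀ (regardless of dual distance). -/

import Mathlib

open Finset Matrix

/-- The Hermitian inner product `(x, y)_h = ∑ i, x i * (y i)^q` on `F^n`. -/
def hermInner {F : Type*} [Field F] (q : ℕ) {n : ℕ} (x y : Fin n → F) : F :=
  ∑ i, x i * (y i) ^ q

/-- The Hermitian dual code `C^{⊥h}`. -/
def hermDual {F : Type*} [Field F] (q : ℕ) {n : ℕ} (C : Submodule F (Fin n → F)) :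
    Submodule F (Fin n → F) where
  carrier := {x | ∀ y ∈ C, hermInner q x y = 0}
  add_mem' := by
    intro a b ha hb y hy
    have h1 := ha y hy
    have h2 := hb y hy
    simp only [hermInner] at *
    rw [show (∑ i, (a + b) i * y i ^ q)
        = (∑ i, a i * y i ^ q) + ∑ i, b i * y i ^ q by
      rw [← Finset.sum_add_distrib]
      exact Finset.sum_congr rfl fun i _ => by simp [add_mul]]
    rw [h1, h2, add_zero]
  zero_mem' := by
    intro y hy
    simp [hermInner]
  smul_mem' := by
    intro c a ha y hy
    have h1 := ha y hy
    simp only [hermInner] at *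
    rw [show (∑ i, (c • a) i * y i ^ q) = c * ∑ i, a i * y i ^ q by
      rw [Finset.mul_sum]
      exact Finset.sum_congr rfl fun i _ => by simp [mul_assoc]]
    rw [h1, mul_zero]

/-- A code is Hermitian LCD if `C ∩ C^{⊥h} = {0}`. -/
def IsHermLCD {F : Type*} [Field F] (q : ℕ) {n : ℕ} (C : Submodule F (Fin n → F)) : Prop :=
  C ⊓ hermDual q C = ⊥

/-- Hamming weight: number of nonzero coordinates. -/
noncomputable def wt {F : Type*} [Field F] {n : ℕ} (x : Fin n → F) : ℕ :=
  Nat.card {i // x i ≠ 0}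

/-- `C` has minimum weight `d`. -/
def minWt {F : Type*} [Field F] {n : ℕ} (C : Submodule F (Fin n → F)) (d : ℕ) : Prop :=
  (∃ c ∈ C, c ≠ 0 ∧ wt c = d) ∧ ∀ c ∈ C, c ≠ 0 → d ≤ wt c

/-- The Hermitian dual distance of `C` is at least 2. -/
def dualDistGeTwo {F : Type*} [Field F] (q : ℕ) {n : ℕ} (C : Submodule F (Fin n → F)) : Prop :=
  ∀ x ∈ hermDual q C, x ≠ 0 → 2 ≤ wt x

/-- The Hermitian dual distance of `C` equals 1, i.e. `C^{⊥h}` contains a weight-one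
vector. -/
def dualDistOne {F : Type*} [Field F] (q : ℕ) {n : ℕ} (C : Submodule F (Fin n → F)) : Prop :=
  ∃ x ∈ hermDual q C, wt x = 1

theorem wt_eq_sum {F : Type*} [Field F] [DecidableEq F] {n : ℕ} (x : Fin n → F) :
    wt x = ∑ i, if x i ≠ 0 then 1 else 0 := by
  unfold wt
  rw [Nat.card_eq_fintype_card, Fintype.card_subtype, Finset.card_filter]

theorem wt_puncture {F : Type*} [Field F] {n : ℕ} (i : Fin (n + 1)) (x : Fin (n + 1) → F)
    (hx : x i = 0) : wt (fun j => x (i.succAbove j)) = wt x := by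
  classical
  rw [wt_eq_sum, wt_eq_sum, Fin.sum_univ_succAbove _ i]
  simp [hx]

theorem hermInner_puncture {F : Type*} [Field F] {n q : ℕ} (i : Fin (n + 1))
    (x y : Fin (n + 1) → F) (hx : x i = 0) :
    hermInner q (fun j => x (i.succAbove j)) (fun j => y (i.succAbove j)) = hermInner q x y := by
  unfold hermInner
  rw [Fin.sum_univ_succAbove _ i]
  simp [hx]

/-- Repeated puncturing at zero coordinates reaches dual distance at least two. -/
theorem exists_dualDistGeTwo {F : Type*} [Field F] (k d n : ℕ)
    (C : Submodule F (Fin n → F)) (hk : Module.finrank F C = k) (hC : IsHermLCD 2 C)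
    (hd : minWt C d) :
    ∃ n' ≤ n, ∃ C' : Submodule F (Fin n' → F),
      Module.finrank F C' = k ∧ IsHermLCD 2 C' ∧ minWt C' d ∧ dualDistGeTwo 2 C' := by
  classical
  induction n with
  | zero =>
    exact ⟨0, le_rfl, C, hk, hC, hd, fun x _ hx => absurd (Subsingleton.elim x 0) hx⟩
  | succ n ih =>
    by_cases h2 : dualDistGeTwo 2 C
    · exact ⟨n + 1, le_rfl, C, hk, hC, hd, h2⟩
    unfold dualDistGeTwo at h2
    push Not at h2
    obtain ⟨x, hxC, hx0, hx2⟩ := h2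
    obtain ⟨i, hi⟩ : ∃ i, x i ≠ 0 := Function.ne_iff.mp hx0
    have hxj : ∀ j, j ≠ i → x j = 0 := by
      intro j hj
      by_contra hne
      have hs : Subsingleton {i // x i ≠ 0} := by
        rw [← Finite.card_le_one_iff_subsingleton]
        unfold wt at hx2
        omega
      exact hj (congrArg Subtype.val (Subsingleton.elim (⟨j, hne⟩ : {i // x i ≠ 0}) ⟨i, hi⟩))
    have hz : ∀ y ∈ C, y i = 0 := by
      intro y hy
      have h1 : hermInner 2 x y = 0 := hxC y hy
      unfold hermInner at h1
      rw [Finset.sum_eq_single i (fun j _ hj => by simp [hxj j hj]) (by simp)] at h1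
      simpa [hi] using h1
    let f : (Fin (n + 1) → F) →ₗ[F] (Fin n → F) := LinearMap.funLeft F F i.succAbove
    have hf : ∀ y, f y = fun j => y (i.succAbove j) := fun y => rfl
    have hf0 : ∀ y ∈ C, f y = 0 → y = 0 := by
      intro y hy h0
      funext j
      rcases Fin.eq_self_or_eq_succAbove i j with rfl | ⟨m, rfl⟩
      · exact hz y hy
      · exact congrFun h0 m
    suffices hs : Module.finrank F (C.map f) = k ∧ IsHermLCD 2 (C.map f) ∧ minWt (C.map f) d by
      obtain ⟨n', hn', H⟩ := ih (C.map f) hs.1 hs.2.1 hs.2.2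
      exact ⟨n', by omega, H⟩
    refine ⟨?_, ?_, ?_⟩
    · rw [← LinearMap.range_domRestrict, LinearMap.finrank_range_of_inj, hk]
      rw [← LinearMap.ker_eq_bot, LinearMap.ker_eq_bot']
      rintro ⟨y, hy⟩ h0
      exact Subtype.ext (hf0 y hy h0)
    · unfold IsHermLCD at hC ⊢
      rw [eq_bot_iff]
      rintro _ ⟨⟨y, hy, rfl⟩, hyd⟩
      have : y ∈ C ⊓ hermDual 2 C := by
        refine ⟨hy, fun z hzC => ?_⟩
        rw [← hermInner_puncture i y z (hz y hy)]
        exact hyd (f z) ⟨z, hzC, rfl⟩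
      rw [hC, Submodule.mem_bot] at this
      simp [this]
    · obtain ⟨⟨c, hc, hc0, hcd⟩, hmin⟩ := hd
      refine ⟨⟨f c, ⟨c, hc, rfl⟩, fun h0 => hc0 (hf0 c hc h0), ?_⟩, ?_⟩
      · rw [hf, wt_puncture i c (hz c hc), hcd]
      · rintro _ ⟨y, hy, rfl⟩ hy0
        rw [hf, wt_puncture i y (hz y hy)]
        exact hmin y hy (fun h0 => hy0 (by rw [h0, map_zero]))

theorem stmt_15 (n k d₀ : ℕ) (hk : 2 ≤ k) (hd₀ : 1 ≤ d₀)
    (h : ∀ n' ≤ n, ¬ ∃ d' : ℕ, d₀ ≤ d' ∧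
      ∃ C : Submodule (GaloisField 2 2) (Fin n' → GaloisField 2 2),
        Module.finrank (GaloisField 2 2) C = k ∧ IsHermLCD 2 C ∧ minWt C d' ∧
        dualDistGeTwo 2 C) :
    ¬ ∃ d : ℕ, d₀ ≤ d ∧
      ∃ C : Submodule (GaloisField 2 2) (Fin n → GaloisField 2 2),
        Module.finrank (GaloisField 2 2) C = k ∧ IsHermLCD 2 C ∧ minWt C d := by
  rintro ⟨d, hd, C, hC, hL, hm⟩
  obtain ⟨n', hn', C', h1, h2, h3, h4⟩ := exists_dualDistGeTwo k d n C hC hL hm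
  exact h n' hn' ⟨d, hd, C', h1, h2, h3, h4⟩
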